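/- Let ϕ, φ, φ̂, f₂, f₃, m₂ be as in the context, and assume in addition that m₂ = ∫_{ℝ²} |x|² φ(x) dx = 0. Then there exists a constant C > 0 (depending on ϕ) such that for k = 0, 1, 2 and all x ∈ ℝ: |f₂^{(k)}(x)| + |f₃^{(k)}(x)| ≤ C / (1 + x⁴), where f^{(k)} denotes the k-th derivative. -/

import Mathlib

open MeasureTheory Real Filter Topology
open scoped ENNReal

noncomputable section

/-- Convolution on `ℝ²`: `(ϕ∗ϕ)(x) = ∫ ϕ(y) ϕ(x−y) dy`. -/
def conv2 (ϕ : ℝ × ℝ → ℝ) (x : ℝ × ℝ) : ℝ := ∫ y : ℝ × ℝ, ϕ y * ϕ (x - y)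

/-- The Fourier transform on `ℝ²`: `ĝ(ξ) = ∫ g(x) e^{−i x·ξ} dx`. -/
def ft2 (g : ℝ × ℝ → ℝ) (ξ : ℝ × ℝ) : ℂ :=
  ∫ x : ℝ × ℝ, (g x : ℂ) * Complex.exp (-Complex.I * ((x.1 : ℂ) * (ξ.1 : ℂ) + (x.2 : ℂ) * (ξ.2 : ℂ)))

/-- `f₁(x) = (x/π) ∫_{ℝ²} e^{ixη₁} (−i η₁ η₂²)/(η₁²+η₂²)² φ̂(η) dη` with `φ = ϕ∗ϕ`. -/
def f1 (ϕ : ℝ × ℝ → ℝ) (x : ℝ) : ℂ :=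
  ((x / π : ℝ) : ℂ) * ∫ η : ℝ × ℝ,
    Complex.exp (Complex.I * (x : ℂ) * (η.1 : ℂ)) *
      (-Complex.I * (η.1 : ℂ) * (η.2 : ℂ) ^ 2 / ((η.1 : ℂ) ^ 2 + (η.2 : ℂ) ^ 2) ^ 2) *
      ft2 (conv2 ϕ) η

/-- `f₂(x) = (x/π) ∫_{ℝ²} e^{ixη₁} (−i η₁ (η₁²−η₂²))/(η₁²+η₂²)² φ̂(η) dη` with `φ = ϕ∗ϕ`. -/
def f2 (ϕ : ℝ × ℝ → ℝ) (x : ℝ) : ℂ :=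
  ((x / π : ℝ) : ℂ) * ∫ η : ℝ × ℝ,
    Complex.exp (Complex.I * (x : ℂ) * (η.1 : ℂ)) *
      (-Complex.I * (η.1 : ℂ) * ((η.1 : ℂ) ^ 2 - (η.2 : ℂ) ^ 2) /
        ((η.1 : ℂ) ^ 2 + (η.2 : ℂ) ^ 2) ^ 2) *
      ft2 (conv2 ϕ) η

/-- `f₃ = f₁ − 1`. -/
def f3 (ϕ : ℝ × ℝ → ℝ) (x : ℝ) : ℂ := f1 ϕ x - 1

/-- `m₁ = ∫_{ℝ²} |x| (ϕ∗ϕ)(x) dx`. -/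
def m1 (ϕ : ℝ × ℝ → ℝ) : ℝ := ∫ x : ℝ × ℝ, Real.sqrt (x.1 ^ 2 + x.2 ^ 2) * conv2 ϕ x

/-- `m₂ = ∫_{ℝ²} |x|² (ϕ∗ϕ)(x) dx`. -/
def m2 (ϕ : ℝ × ℝ → ℝ) : ℝ := ∫ x : ℝ × ℝ, (x.1 ^ 2 + x.2 ^ 2) * conv2 ϕ x

/-! Identify `ℝ²` with `ℂ` and write `Tₙ φ` for the Fourier multiplier operator with symbol
`ζ̄ⁿ / ζⁿ⁺¹`. The symbols in `f₁` and `f₂` are real combinations of the real parts of `1 / ζ` and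
`ζ̄ / ζ²`, and the real parts may be dropped because `φ̂` is invariant under conjugation; on the
real axis this gives `f₂ = -i x (T₀ φ + T₁ φ)` and `f₁ = -(i / 2) x (T₀ φ - T₁ φ)`.

The symbols encode the equations `(∂₁ + i ∂₂) T₀ φ = 2πi φ` and
`(∂₁ + i ∂₂) T₁ φ = (∂₁ - i ∂₂) T₀ φ`. For radial `φ` rotation equivariance expresses `∂₂ Tₙ φ` on
the real axis through `Tₙ φ` itself, so these become ordinary differential equations there:
`(x T₀ φ)' = 2πi x φ` and `(x³ (T₀ φ + T₁ φ))' = 4πi x³ φ`. As in Newton's theorem, beyond the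
support of `φ` the integrated right-hand sides are multiples of `∫ φ` and `∫ |x|² φ`. When the
latter vanishes, `f₂ = 0` and `f₁ = ∫ φ` there, so `f₂` and `f₁ - ∫ φ` are smooth with compact
support and all their derivatives decay faster than any power. -/

open scoped FourierTransform SchwartzMap ComplexConjugate RealInnerProductSpace ContDiff

section FourierInv

variable {V E : Type*} [NormedAddCommGroup V] [InnerProductSpace ℝ V] [MeasurableSpace V]
  [BorelSpace V] [FiniteDimensional ℝ V] [NormedAddCommGroup E] [NormedSpace ℂ E] {f : V → E}

theorem contDiff_fourierInv {N : ℕ∞} (hf : ∀ n : ℕ, n ≤ N → Integrable fun v => ‖v‖ ^ n * ‖f v‖) :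
    ContDiff ℝ N (𝓕⁻ f) := by
  rw [funext (Real.fourierInv_eq_fourier_neg f)]
  exact (Real.contDiff_fourier hf).comp contDiff_neg

theorem fderiv_fourierInv_apply (hf : Integrable f) (hvf : Integrable fun v => ‖v‖ * ‖f v‖)
    (x m : V) :
    fderiv ℝ (𝓕⁻ f) x m = (2 * π * Complex.I : ℂ) • 𝓕⁻ (fun v => ⟪v, m⟫ • f v) x := by
  have hint : Integrable (VectorFourier.fourierSMulRight (innerSL ℝ) f) :=
    (hvf.const_mul (2 * π * ‖innerSL ℝ (E := V)‖)).mono' hf.1.fourierSMulRight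
      (.of_forall fun v => by
        simpa only [mul_assoc] using VectorFourier.norm_fourierSMulRight_le (innerSL ℝ) f v)
  have hderiv := (Real.hasFDerivAt_fourier hf hvf (-x)).comp x (hasFDerivAt_id x).neg
  have hinv : 𝓕⁻ f = 𝓕 f ∘ fun v => -v := funext (Real.fourierInv_eq_fourier_neg f)
  rw [hinv, HasFDerivAt.fderiv hderiv, Real.fourierInv_eq_fourier_neg]
  simp only [ContinuousLinearMap.comp_neg, neg_apply,
    ContinuousLinearMap.comp_id, Real.fourier_continuousLinearMap_apply hint,
    VectorFourier.fourierSMulRight_apply]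
  have hconst := VectorFourier.fourierIntegral_const_smul 𝐞 volume (innerₗ V)
    (fun v => ⟪v, m⟫ • f v) (-(2 * π * Complex.I : ℂ))
  rw [← neg_neg (2 * π * Complex.I : ℂ), neg_smul (- _), neg_neg]
  exact congrArg Neg.neg (congrFun hconst (-x))

theorem fourierInv_const_smul (c : ℂ) (f : V → E) : 𝓕⁻ (c • f) = c • 𝓕⁻ f := by
  ext x
  simp only [Real.fourierInv_eq, Pi.smul_apply, smul_comm _ c, integral_smul]

theorem fourierInv_add_of_integrable {g : V → E} (hf : Integrable f) (hg : Integrable g) :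
    𝓕⁻ (f + g) = 𝓕⁻ f + 𝓕⁻ g := by
  ext x
  have hint {h : V → E} (hh : Integrable h) : Integrable fun v => 𝐞 ⟪v, x⟫ • h v := by
    simpa only [inner_neg_right, neg_neg] using (Real.fourierIntegral_convergent_iff (-x)).2 hh
  simp only [Real.fourierInv_eq, Pi.add_apply, smul_add, integral_add (hint hf) (hint hg)]

end FourierInv

theorem fderiv_one_add_mul_fderiv_I_fourierInv {f : ℂ → ℂ} (hf : Integrable f)
    (hvf : Integrable fun ζ => ‖ζ‖ * ‖f ζ‖) (c x : ℂ) :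
    fderiv ℝ (𝓕⁻ f) x 1 + c * fderiv ℝ (𝓕⁻ f) x Complex.I =
      2 * π * Complex.I * 𝓕⁻ (fun ζ => (ζ.re + c * ζ.im) * f ζ) x := by
  have hre : Integrable fun ζ : ℂ => (ζ.re : ℂ) * f ζ :=
    hvf.mono' (by fun_prop) (.of_forall fun ζ => by
      rw [norm_mul, Complex.norm_real]; gcongr; exact Complex.abs_re_le_norm ζ)
  have him : Integrable fun ζ : ℂ => (ζ.im : ℂ) * f ζ :=
    hvf.mono' (by fun_prop) (.of_forall fun ζ => by
      rw [norm_mul, Complex.norm_real]; gcongr; exact Complex.abs_im_le_norm ζ)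
  have hsplit : (fun ζ : ℂ => (ζ.re + c * ζ.im) * f ζ) =
      (fun ζ => (ζ.re : ℂ) * f ζ) + c • fun ζ => (ζ.im : ℂ) * f ζ := by
    ext ζ
    simp only [Pi.add_apply, Pi.smul_apply, smul_eq_mul]
    ring
  rw [hsplit, fourierInv_add_of_integrable hre (him.smul c), fourierInv_const_smul]
  simp only [fderiv_fourierInv_apply hf hvf, Complex.inner, Complex.real_smul, smul_eq_mul,
    Pi.add_apply, Pi.smul_apply, one_mul, Complex.conj_re, Complex.I_mul_re, Complex.conj_im,
    neg_neg]
  ring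

theorem integrable_norm_inv_mul_norm_schwartzMap {V E : Type*} [NormedAddCommGroup V]
    [NormedSpace ℝ V] [FiniteDimensional ℝ V] [MeasurableSpace V] [BorelSpace V]
    [NormedAddCommGroup E] [NormedSpace ℝ E] (μ : Measure V) [μ.IsAddHaarMeasure]
    (hV : 1 < Module.finrank ℝ V) (ψ : 𝓢(V, E)) : Integrable (fun v => ‖v‖⁻¹ * ‖ψ v‖) μ := by
  have : Nontrivial V := Module.nontrivial_of_finrank_pos (R := ℝ) (by omega)
  obtain ⟨d, hd⟩ : ∃ d, Module.finrank ℝ V = d + 2 := Nat.exists_eq_add_of_le' hV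
  obtain ⟨C, hC⟩ : ∃ C, ∀ v, (1 + ‖v‖) ^ (d + 2) * ‖ψ v‖ ≤ C :=
    ⟨_, fun v => by simpa only [norm_iteratedFDeriv_zero] using
      ψ.one_add_le_sup_seminorm_apply (𝕜 := ℝ) (m := (d + 2, 0)) le_rfl le_rfl v⟩
  have hmajorant : Integrable (fun v : V => ‖v‖⁻¹ * ((1 + ‖v‖) ^ (d + 2))⁻¹) μ := by
    rw [integrable_fun_norm_addHaar μ (f := fun r => r⁻¹ * ((1 + r) ^ (d + 2))⁻¹), hd]
    refine integrable_inv_one_add_sq.integrableOn.mono' (by fun_prop)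
      ((ae_restrict_iff' measurableSet_Ioi).2 (.of_forall fun r (hr : 0 < r) => ?_))
    have hratio : r ^ (d + 1) * (r⁻¹ * ((1 + r) ^ (d + 2))⁻¹) =
        (r / (1 + r)) ^ d * ((1 + r) ^ 2)⁻¹ := by
      rw [div_pow, pow_succ r, pow_add (1 + r)]
      field_simp
    rw [Nat.add_succ_sub_one, smul_eq_mul, hratio, Real.norm_of_nonneg (by positivity)]
    have hle : (r / (1 + r)) ^ d ≤ 1 :=
      pow_le_one₀ (by positivity) ((div_le_one (by positivity)).2 (by linarith))
    calc (r / (1 + r)) ^ d * ((1 + r) ^ 2)⁻¹ ≤ 1 * (1 + r ^ 2)⁻¹ := by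
          gcongr
          nlinarith
      _ = (1 + r ^ 2)⁻¹ := one_mul _
  refine (hmajorant.const_mul C).mono' (by fun_prop) (.of_forall fun v => ?_)
  have hv : ‖ψ v‖ ≤ C * ((1 + ‖v‖) ^ (d + 2))⁻¹ := by
    rw [← div_eq_mul_inv, le_div_iff₀' (by positivity)]
    exact hC v
  rw [Real.norm_of_nonneg (by positivity), mul_left_comm]
  gcongr

/-- The Fourier symbol `ζ̄ⁿ / ζⁿ⁺¹` on `ℂ`, equal to `0` at `ζ = 0`. Up to constants it is the
symbol of the Cauchy transform (the inverse of `∂/∂z̄`, symbol `1 / ζ`) followed by `n` Beurling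
transforms (symbol `ζ̄ / ζ`). -/
def cauchyBeurlingSymbol (n : ℕ) (ζ : ℂ) : ℂ := conj ζ ^ n / ζ ^ (n + 1)

section Symbol

variable (n : ℕ) (ζ : ℂ)

theorem measurable_cauchyBeurlingSymbol : Measurable (cauchyBeurlingSymbol n) :=
  (Complex.continuous_conj.measurable.pow_const n).div (measurable_id.pow_const (n + 1))

theorem norm_cauchyBeurlingSymbol : ‖cauchyBeurlingSymbol n ζ‖ = ‖ζ‖⁻¹ := by
  rcases eq_or_ne ζ 0 with rfl | hζ
  · simp [cauchyBeurlingSymbol]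
  · rw [cauchyBeurlingSymbol, norm_div, norm_pow, norm_pow, Complex.norm_conj, pow_succ]
    field_simp

theorem mul_cauchyBeurlingSymbol_zero (hζ : ζ ≠ 0) : ζ * cauchyBeurlingSymbol 0 ζ = 1 := by
  simp [cauchyBeurlingSymbol, hζ]

theorem mul_cauchyBeurlingSymbol_succ :
    ζ * cauchyBeurlingSymbol (n + 1) ζ = conj ζ * cauchyBeurlingSymbol n ζ := by
  rcases eq_or_ne ζ 0 with rfl | hζ
  · simp
  · rw [cauchyBeurlingSymbol, cauchyBeurlingSymbol, pow_succ, pow_succ ζ (n + 1)]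
    field_simp

theorem cauchyBeurlingSymbol_circle_mul (a : Circle) :
    cauchyBeurlingSymbol n (a * ζ) = (a⁻¹ : ℂ) ^ (2 * n + 1) * cauchyBeurlingSymbol n ζ := by
  simp only [cauchyBeurlingSymbol, map_mul, mul_pow, ← Circle.coe_inv_eq_conj, Circle.coe_inv]
  ring

theorem cauchyBeurlingSymbol_ofReal_mul (r : ℝ) :
    cauchyBeurlingSymbol n (r * ζ) = (r : ℂ)⁻¹ * cauchyBeurlingSymbol n ζ := by
  rcases eq_or_ne r 0 with rfl | hr
  · simp [cauchyBeurlingSymbol]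
  · have hr' : (r : ℂ) ≠ 0 := by exact_mod_cast hr
    simp only [cauchyBeurlingSymbol, map_mul, mul_pow, Complex.conj_ofReal, pow_succ]
    field_simp

theorem cauchyBeurlingSymbol_conj :
    cauchyBeurlingSymbol n (conj ζ) = conj (cauchyBeurlingSymbol n ζ) := by
  simp only [cauchyBeurlingSymbol, map_div₀, map_pow]

theorem integrable_pow_mul_norm_cauchyBeurlingSymbol_mul (ψ : 𝓢(ℂ, ℂ)) (k : ℕ) :
    Integrable fun ζ => ‖ζ‖ ^ k * ‖cauchyBeurlingSymbol n ζ * ψ ζ‖ := by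
  simp only [norm_mul, norm_cauchyBeurlingSymbol]
  cases k with
  | zero =>
    simpa only [pow_zero, one_mul] using
      integrable_norm_inv_mul_norm_schwartzMap volume (by simp) ψ
  | succ k =>
    refine (ψ.integrable_pow_mul volume k).mono' (by fun_prop) (.of_forall fun ζ => ?_)
    rw [Real.norm_of_nonneg (by positivity)]
    calc ‖ζ‖ ^ (k + 1) * (‖ζ‖⁻¹ * ‖ψ ζ‖) = (‖ζ‖ * ‖ζ‖⁻¹) * (‖ζ‖ ^ k * ‖ψ ζ‖) := by ring
      _ ≤ ‖ζ‖ ^ k * ‖ψ ζ‖ := mul_le_of_le_one_left (by positivity) (mul_inv_le_one ..)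

theorem integrable_cauchyBeurlingSymbol_mul (ψ : 𝓢(ℂ, ℂ)) :
    Integrable fun ζ => cauchyBeurlingSymbol n ζ * ψ ζ := by
  have hmeas : Measurable fun ζ => cauchyBeurlingSymbol n ζ * ψ ζ :=
    (measurable_cauchyBeurlingSymbol n).mul ψ.continuous.measurable
  refine (integrable_norm_iff (μ := volume) hmeas.aestronglyMeasurable).1 ?_
  simpa only [pow_zero, one_mul] using integrable_pow_mul_norm_cauchyBeurlingSymbol_mul n ψ 0

end Symbol

/-- The iterated Beurling transform of the Cauchy transform of `φ`, up to constants: the Fourier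
multiplier operator with symbol `cauchyBeurlingSymbol n` applied to `φ`. -/
def cauchyBeurling (n : ℕ) (φ : 𝓢(ℂ, ℂ)) : ℂ → ℂ :=
  𝓕⁻ fun ζ => cauchyBeurlingSymbol n ζ * 𝓕 φ ζ

/-- Invariance under all linear isometries, which for functions on a Euclidean space says that
`f x` depends only on `‖x‖`. This formulation passes directly through convolutions and Fourier
transforms. -/
def IsRadial {V E : Type*} [NormedAddCommGroup V] [NormedSpace ℝ V] (f : V → E) : Prop :=
  ∀ (A : V ≃ₗᵢ[ℝ] V) (x : V), f (A x) = f x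

theorem IsRadial.fourier {V E : Type*} [NormedAddCommGroup V] [InnerProductSpace ℝ V]
    [MeasurableSpace V] [BorelSpace V] [FiniteDimensional ℝ V] [NormedAddCommGroup E]
    [NormedSpace ℂ E] {f : V → E} (hf : IsRadial f) : IsRadial (𝓕 f) := fun A x => by
  rw [← Real.fourier_comp_linearIsometry, show f ∘ A = f from funext (hf A)]

theorem IsRadial.apply_eq_apply_norm {E : Type*} {f : ℂ → E} (hf : IsRadial f) (z : ℂ) :
    f z = f ‖z‖ := by
  rw [← hf (rotation (Circle.exp (Complex.arg z))) ‖z‖, rotation_apply, Circle.coe_exp,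
    mul_comm, Complex.norm_mul_exp_arg_mul_I]

section CauchyBeurling

variable (n : ℕ) (φ : 𝓢(ℂ, ℂ))

theorem contDiff_cauchyBeurling : ContDiff ℝ ∞ (cauchyBeurling n φ) :=
  contDiff_fourierInv fun k _ => integrable_pow_mul_norm_cauchyBeurlingSymbol_mul n (𝓕 φ) k

theorem contDiff_cauchyBeurling_ofReal : ContDiff ℝ ∞ fun x : ℝ => cauchyBeurling n φ x :=
  (contDiff_cauchyBeurling n φ).comp Complex.ofRealCLM.contDiff

theorem hasDerivAt_cauchyBeurling_ofReal (x : ℝ) :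
    HasDerivAt (fun x : ℝ => cauchyBeurling n φ x) (fderiv ℝ (cauchyBeurling n φ) x 1) x :=
  ((contDiff_cauchyBeurling n φ).differentiable (by simp) x).hasFDerivAt.comp_hasDerivAt x
    Complex.ofRealCLM.hasDerivAt

theorem fderiv_one_add_mul_fderiv_I_cauchyBeurling (c z : ℂ) :
    fderiv ℝ (cauchyBeurling n φ) z 1 + c * fderiv ℝ (cauchyBeurling n φ) z Complex.I =
      2 * π * Complex.I *
        𝓕⁻ (fun ζ => (ζ.re + c * ζ.im) * (cauchyBeurlingSymbol n ζ * 𝓕 φ ζ)) z :=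
  fderiv_one_add_mul_fderiv_I_fourierInv (integrable_cauchyBeurlingSymbol_mul n (𝓕 φ))
    (by simpa only [pow_one] using integrable_pow_mul_norm_cauchyBeurlingSymbol_mul n (𝓕 φ) 1) c z

theorem fderiv_one_add_I_mul_fderiv_I_cauchyBeurling_zero (z : ℂ) :
    fderiv ℝ (cauchyBeurling 0 φ) z 1 + Complex.I * fderiv ℝ (cauchyBeurling 0 φ) z Complex.I =
      2 * π * Complex.I * φ z := by
  have hcancel : (fun ζ => (ζ.re + Complex.I * ζ.im) * (cauchyBeurlingSymbol 0 ζ * 𝓕 φ ζ))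
      =ᵐ[volume] (𝓕 φ : 𝓢(ℂ, ℂ)) := by
    filter_upwards [compl_mem_ae_iff.2 (measure_singleton (0 : ℂ))] with ζ hζ
    rw [mul_comm Complex.I, Complex.re_add_im, ← mul_assoc, mul_cauchyBeurlingSymbol_zero ζ hζ,
      one_mul]
  rw [fderiv_one_add_mul_fderiv_I_cauchyBeurling, Real.fourierInv_eq_fourier_neg,
    Real.fourier_congr_ae hcancel, ← Real.fourierInv_eq_fourier_neg, ← SchwartzMap.fourierInv_coe,
    FourierTransform.fourierInv_fourier_eq]

theorem fderiv_one_add_I_mul_fderiv_I_cauchyBeurling_succ (z : ℂ) :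
    fderiv ℝ (cauchyBeurling (n + 1) φ) z 1 +
        Complex.I * fderiv ℝ (cauchyBeurling (n + 1) φ) z Complex.I =
      fderiv ℝ (cauchyBeurling n φ) z 1 -
        Complex.I * fderiv ℝ (cauchyBeurling n φ) z Complex.I := by
  rw [sub_eq_add_neg, ← neg_mul, fderiv_one_add_mul_fderiv_I_cauchyBeurling,
    fderiv_one_add_mul_fderiv_I_cauchyBeurling]
  congr 2
  refine congrFun (congrArg _ (funext fun ζ => ?_)) z
  have hconj : ζ.re + -Complex.I * ζ.im = conj ζ := by
    apply Complex.ext <;> simp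
  rw [hconj, mul_comm Complex.I, Complex.re_add_im, ← mul_assoc, mul_cauchyBeurlingSymbol_succ,
    mul_assoc]

variable {φ}

theorem cauchyBeurling_circle_mul (hφ : IsRadial φ) (a : Circle) (z : ℂ) :
    cauchyBeurling n φ (a * z) = (a⁻¹ : ℂ) ^ (2 * n + 1) * cauchyBeurling n φ z := by
  have hsymbol : (fun ζ => cauchyBeurlingSymbol n ζ * 𝓕 φ ζ) ∘ rotation a =
      (a⁻¹ : ℂ) ^ (2 * n + 1) • fun ζ => cauchyBeurlingSymbol n ζ * 𝓕 φ ζ := by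
    ext ζ
    rw [Function.comp_apply, SchwartzMap.fourier_coe, hφ.fourier, rotation_apply,
      cauchyBeurlingSymbol_circle_mul, mul_assoc, Pi.smul_apply, smul_eq_mul]
  rw [← rotation_apply, cauchyBeurling, ← Real.fourierInv_comp_linearIsometry, hsymbol,
    fourierInv_const_smul, Pi.smul_apply, smul_eq_mul]

theorem cauchyBeurling_neg (hφ : IsRadial φ) (z : ℂ) :
    cauchyBeurling n φ (-z) = -cauchyBeurling n φ z := by
  simpa [Odd.neg_one_pow ⟨n, rfl⟩] using cauchyBeurling_circle_mul n hφ (-1) z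

theorem fderiv_cauchyBeurling_I_mul (hφ : IsRadial φ) (z : ℂ) :
    fderiv ℝ (cauchyBeurling n φ) z (Complex.I * z) =
      -((2 * n + 1) * Complex.I) * cauchyBeurling n φ z := by
  have hcircle : HasDerivAt (fun θ : ℝ => (Circle.exp θ * z : ℂ)) (Complex.I * z) 0 := by
    simpa using ((Complex.ofRealCLM.hasDerivAt (x := 0)).mul_const Complex.I).cexp.mul_const z
  have hequivariant : HasDerivAt (fun θ : ℝ => cauchyBeurling n φ (Circle.exp θ * z))
      (-((2 * n + 1) * Complex.I) * cauchyBeurling n φ z) 0 := by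
    have hphase : (fun θ : ℝ => cauchyBeurling n φ (Circle.exp θ * z)) = fun θ : ℝ =>
        Complex.exp (θ * -((2 * n + 1) * Complex.I)) * cauchyBeurling n φ z := by
      ext θ
      rw [cauchyBeurling_circle_mul n hφ, Circle.coe_exp, ← Complex.exp_neg, ← Complex.exp_nat_mul]
      push_cast
      ring_nf
    rw [hphase]
    simpa using ((Complex.ofRealCLM.hasDerivAt (x := 0)).mul_const
      (-((2 * n + 1) * Complex.I))).cexp.mul_const (cauchyBeurling n φ z)
  have hchain := (((contDiff_cauchyBeurling n φ).differentiable (by simp)).differentiableAt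
    (x := ↑(Circle.exp 0) * z)).hasFDerivAt.comp_hasDerivAt 0 hcircle
  simpa using hchain.unique hequivariant

theorem ofReal_mul_fderiv_cauchyBeurling_I (hφ : IsRadial φ) (x : ℝ) :
    x * fderiv ℝ (cauchyBeurling n φ) x Complex.I =
      -((2 * n + 1) * Complex.I) * cauchyBeurling n φ x := by
  rw [← fderiv_cauchyBeurling_I_mul n hφ, mul_comm Complex.I, ← Complex.real_smul,
    ← Complex.real_smul, map_smul]

theorem hasDerivAt_ofReal_mul_cauchyBeurling_zero (hφ : IsRadial φ) (x : ℝ) :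
    HasDerivAt (fun x : ℝ => x * cauchyBeurling 0 φ x) (2 * π * Complex.I * (x * φ x)) x := by
  have hrot := ofReal_mul_fderiv_cauchyBeurling_I 0 hφ x
  have hdbar := fderiv_one_add_I_mul_fderiv_I_cauchyBeurling_zero φ x
  refine (Complex.ofRealCLM.hasDerivAt.mul (hasDerivAt_cauchyBeurling_ofReal 0 φ x)).congr_deriv ?_
  simp only [Complex.ofRealCLM_apply, Complex.ofReal_one]
  push_cast at hrot
  linear_combination (x : ℂ) * hdbar - Complex.I * hrot + cauchyBeurling 0 φ x * Complex.I_sq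

theorem hasDerivAt_ofReal_pow_three_mul_cauchyBeurling_add (hφ : IsRadial φ) (x : ℝ) :
    HasDerivAt (fun x : ℝ => (x : ℂ) ^ 3 * (cauchyBeurling 0 φ x + cauchyBeurling 1 φ x))
      (4 * π * Complex.I * (x ^ 3 * φ x)) x := by
  have hrot₀ := ofReal_mul_fderiv_cauchyBeurling_I 0 hφ x
  have hrot₁ := ofReal_mul_fderiv_cauchyBeurling_I 1 hφ x
  have hdbar₀ := fderiv_one_add_I_mul_fderiv_I_cauchyBeurling_zero φ x
  have hdbar₁ := fderiv_one_add_I_mul_fderiv_I_cauchyBeurling_succ 0 φ x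
  refine ((Complex.ofRealCLM.hasDerivAt.pow 3).mul ((hasDerivAt_cauchyBeurling_ofReal 0 φ x).add
    (hasDerivAt_cauchyBeurling_ofReal 1 φ x))).congr_deriv ?_
  simp only [Complex.ofRealCLM_apply, Complex.ofReal_one, Pi.add_apply, Pi.pow_apply]
  push_cast at hrot₀ hrot₁
  linear_combination (x : ℂ) ^ 3 * hdbar₁ + 2 * (x : ℂ) ^ 3 * hdbar₀ -
    Complex.I * (x : ℂ) ^ 2 * (hrot₁ + 3 * hrot₀) +
    3 * (x : ℂ) ^ 2 * (cauchyBeurling 0 φ x + cauchyBeurling 1 φ x) * Complex.I_sq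

theorem ofReal_mul_cauchyBeurling_zero (hφ : IsRadial φ) (x : ℝ) :
    x * cauchyBeurling 0 φ x = 2 * π * Complex.I * ∫ s in 0..x, (s * φ s : ℂ) := by
  have hcont : Continuous fun s : ℝ => (s * φ s : ℂ) := by fun_prop
  rw [← intervalIntegral.integral_const_mul, intervalIntegral.integral_eq_sub_of_hasDerivAt
    (fun s _ => hasDerivAt_ofReal_mul_cauchyBeurling_zero hφ s)
    ((hcont.const_mul _).intervalIntegrable 0 x)]
  simp only [Complex.ofReal_zero, zero_mul, sub_zero]

theorem ofReal_pow_three_mul_cauchyBeurling_add (hφ : IsRadial φ) (x : ℝ) :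
    (x : ℂ) ^ 3 * (cauchyBeurling 0 φ x + cauchyBeurling 1 φ x) =
      4 * π * Complex.I * ∫ s in 0..x, (s ^ 3 * φ s : ℂ) := by
  have hcont : Continuous fun s : ℝ => (s ^ 3 * φ s : ℂ) := by fun_prop
  rw [← intervalIntegral.integral_const_mul, intervalIntegral.integral_eq_sub_of_hasDerivAt
    (fun s _ => hasDerivAt_ofReal_pow_three_mul_cauchyBeurling_add hφ s)
    ((hcont.const_mul _).intervalIntegrable 0 x)]
  simp only [Complex.ofReal_zero, zero_pow three_ne_zero, zero_mul, sub_zero]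

theorem IsRadial.integral_norm_pow_mul {f : ℂ → ℂ} (hf : IsRadial f) {R : ℝ} (hR : 0 ≤ R)
    (hsupp : Function.support f ⊆ Metric.closedBall 0 R) (k : ℕ) :
    ∫ z, (‖z‖ ^ k * f z : ℂ) = 2 * π * ∫ s in 0..R, (s ^ (k + 1) * f s : ℂ) := by
  have hvanish : ∀ s ∈ Set.Ioi (0 : ℝ) \ Set.Ioc 0 R, s • ((s : ℂ) ^ k * f s) = 0 := by
    rintro s ⟨hs, hsR⟩
    have hs' : f s = 0 := by_contra fun h =>
      hsR ⟨hs, by simpa [abs_of_pos (Set.mem_Ioi.1 hs)] using hsupp h⟩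
    rw [hs', mul_zero, smul_zero]
  calc ∫ z, (‖z‖ ^ k * f z : ℂ) = ∫ z : ℂ, (‖z‖ : ℂ) ^ k * f ‖z‖ := by
        simp only [← hf.apply_eq_apply_norm]
    _ = 2 * π * ∫ s in Set.Ioi (0 : ℝ), s • ((s : ℂ) ^ k * f s) := by
        rw [integral_fun_norm_addHaar volume (fun s : ℝ => (s : ℂ) ^ k * f s)]
        simp [Measure.real, mul_assoc]
    _ = 2 * π * ∫ s in 0..R, (s ^ (k + 1) * f s : ℂ) := by
        rw [setIntegral_eq_of_subset_of_forall_sdiff_eq_zero measurableSet_Ioi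
          Set.Ioc_subset_Ioi_self hvanish, intervalIntegral.integral_of_le hR]
        simp only [Complex.real_smul, pow_succ', mul_assoc]

theorem ofReal_mul_cauchyBeurling_zero_of_support_subset (hφ : IsRadial φ) {x : ℝ}
    (hx : Function.support φ ⊆ Metric.closedBall 0 |x|) :
    x * cauchyBeurling 0 φ x = Complex.I * ∫ z, φ z := by
  wlog h0 : 0 ≤ x generalizing x
  · simpa [cauchyBeurling_neg 0 hφ] using this (x := -x) (by simpa using hx) (by linarith)
  rw [abs_of_nonneg h0] at hx
  have hpolar := hφ.integral_norm_pow_mul h0 hx 0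
  simp only [pow_zero, one_mul, zero_add, pow_one] at hpolar
  rw [ofReal_mul_cauchyBeurling_zero hφ, hpolar]
  ring

theorem ofReal_pow_three_mul_cauchyBeurling_add_of_support_subset (hφ : IsRadial φ) {x : ℝ}
    (hx : Function.support φ ⊆ Metric.closedBall 0 |x|) :
    (x : ℂ) ^ 3 * (cauchyBeurling 0 φ x + cauchyBeurling 1 φ x) =
      2 * Complex.I * ∫ z, (‖z‖ ^ 2 * φ z : ℂ) := by
  wlog h0 : 0 ≤ x generalizing x
  · have hneg := this (x := -x) (by simpa using hx) (by linarith)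
    push_cast [cauchyBeurling_neg _ hφ] at hneg
    linear_combination hneg
  rw [abs_of_nonneg h0] at hx
  rw [ofReal_pow_three_mul_cauchyBeurling_add hφ, hφ.integral_norm_pow_mul h0 hx 2]
  ring

end CauchyBeurling

section RealPlane

theorem integral_comp_re_im {E : Type*} [NormedAddCommGroup E] [NormedSpace ℝ E] (h : ℝ × ℝ → E) :
    ∫ z : ℂ, h (z.re, z.im) = ∫ x, h x :=
  Complex.volume_preserving_equiv_real_prod.integral_comp
    Complex.measurableEquivRealProd.measurableEmbedding h

variable {g : ℝ × ℝ → ℝ} {φ : 𝓢(ℂ, ℂ)}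

theorem ft2_re_im (hg : ∀ z, φ z = g (z.re, z.im)) (ζ : ℂ) :
    ft2 g (ζ.re, ζ.im) = 𝓕 φ ((2 * π)⁻¹ • ζ) := by
  rw [ft2, ← integral_comp_re_im, SchwartzMap.fourier_coe, Real.fourier_eq']
  refine integral_congr_ae (.of_forall fun z => ?_)
  have hinner : -2 * π * ⟪z, (2 * π)⁻¹ • ζ⟫ = -(z.re * ζ.re + z.im * ζ.im) := by
    rw [real_inner_smul_right, Complex.inner]
    simp only [Complex.mul_re, Complex.conj_re, Complex.conj_im]
    field_simp
    ring
  simp only [hinner, hg, smul_eq_mul]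
  push_cast
  ring_nf

theorem integral_exp_mul_mul_ft2 (hg : ∀ z, φ z = g (z.re, z.im)) {m : ℂ → ℂ}
    (hm : ∀ (r : ℝ) (ζ : ℂ), m (r * ζ) = (r : ℂ)⁻¹ * m ζ) (x : ℝ) :
    ∫ η : ℝ × ℝ, Complex.exp (Complex.I * x * η.1) * m ⟨η.1, η.2⟩ * ft2 g η =
      2 * π * 𝓕⁻ (fun ζ => m ζ * 𝓕 φ ζ) (x : ℂ) := by
  let K : ℂ → ℂ := fun ζ => Complex.exp ((2 * π * ⟪ζ, (x : ℂ)⟫ : ℝ) * Complex.I) • (m ζ * 𝓕 φ ζ)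
  have hscale (ζ : ℂ) : Complex.exp (Complex.I * x * ζ.re) * m ζ * ft2 g (ζ.re, ζ.im) =
      (2 * π : ℂ)⁻¹ * K ((2 * π)⁻¹ • ζ) := by
    have hphase : 2 * π * ⟪(2 * π)⁻¹ • ζ, (x : ℂ)⟫ = x * ζ.re := by
      rw [real_inner_smul_left, mul_inv_cancel_left₀ two_pi_pos.ne', Complex.inner]
      simp [mul_comm]
    have hhom : m ((2 * π)⁻¹ • ζ) = 2 * π * m ζ := by
      rw [Complex.real_smul, hm]
      push_cast
      rw [inv_inv]
    simp only [K, hphase, hhom, ft2_re_im hg, smul_eq_mul]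
    push_cast
    field_simp
  calc _ = ∫ ζ : ℂ, (2 * π : ℂ)⁻¹ * K ((2 * π)⁻¹ • ζ) := by
        simp only [← integral_comp_re_im, Complex.eta, hscale]
    _ = (2 * π : ℂ)⁻¹ * ((2 * π : ℂ) ^ 2 * ∫ ζ, K ζ) := by
        rw [integral_const_mul, Measure.integral_comp_smul_of_nonneg volume K
          (2 * π)⁻¹ (hR := by positivity),
          Complex.finrank_real_complex, ← inv_pow, inv_inv, Complex.real_smul]
        push_cast
        rfl
    _ = 2 * π * 𝓕⁻ (fun ζ => m ζ * 𝓕 φ ζ) (x : ℂ) := by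
        rw [Real.fourierInv_eq']
        field_simp
        rfl

theorem fourierInv_re_mul {m ψ : ℂ → ℂ} (hψ : IsRadial ψ) (hm : ∀ ζ, m (conj ζ) = conj (m ζ))
    (hint : Integrable fun ζ => m ζ * ψ ζ) (x : ℝ) :
    𝓕⁻ (fun ζ => ((m ζ).re : ℂ) * ψ ζ) (x : ℂ) = 𝓕⁻ (fun ζ => m ζ * ψ ζ) (x : ℂ) := by
  have hreflect : (fun ζ => conj (m ζ) * ψ ζ) = (fun ζ => m ζ * ψ ζ) ∘ Complex.conjLIE := by
    ext ζ
    rw [Function.comp_apply, hψ, Complex.conjLIE_apply, hm]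
  have hre : (fun ζ => ((m ζ).re : ℂ) * ψ ζ) =
      (2⁻¹ : ℂ) • ((fun ζ => m ζ * ψ ζ) + fun ζ => conj (m ζ) * ψ ζ) := by
    ext ζ
    simp only [Complex.re_eq_add_conj, Pi.smul_apply, Pi.add_apply, smul_eq_mul]
    ring
  have hint' : Integrable fun ζ => conj (m ζ) * ψ ζ := by
    rw [hreflect]
    exact Complex.conjLIE.measurePreserving.integrable_comp_of_integrable hint
  rw [hre, fourierInv_const_smul, fourierInv_add_of_integrable hint hint', hreflect, Pi.smul_apply,
    Pi.add_apply, Real.fourierInv_comp_linearIsometry, Complex.conjLIE_apply,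
    Complex.conj_ofReal, smul_eq_mul]
  ring

theorem integral_exp_mul_re_cauchyBeurlingSymbol_mul_ft2 (hg : ∀ z, φ z = g (z.re, z.im))
    (hφ : IsRadial φ) (c x : ℝ) :
    ∫ η : ℝ × ℝ, Complex.exp (Complex.I * x * η.1) *
        ((cauchyBeurlingSymbol 0 ⟨η.1, η.2⟩ + c * cauchyBeurlingSymbol 1 ⟨η.1, η.2⟩).re : ℂ) *
          ft2 g η =
      2 * π * (cauchyBeurling 0 φ x + c * cauchyBeurling 1 φ x) := by
  have hint₀ := integrable_cauchyBeurlingSymbol_mul 0 (𝓕 φ)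
  have hint₁ := (integrable_cauchyBeurlingSymbol_mul 1 (𝓕 φ)).smul (c : ℂ)
  have hsplit : (fun ζ => (cauchyBeurlingSymbol 0 ζ + c * cauchyBeurlingSymbol 1 ζ) * 𝓕 φ ζ) =
      (fun ζ => cauchyBeurlingSymbol 0 ζ * 𝓕 φ ζ) +
        (c : ℂ) • fun ζ => cauchyBeurlingSymbol 1 ζ * 𝓕 φ ζ := by
    ext ζ
    simp only [Pi.add_apply, Pi.smul_apply, smul_eq_mul]
    ring
  let m : ℂ → ℂ := fun ζ => cauchyBeurlingSymbol 0 ζ + c * cauchyBeurlingSymbol 1 ζ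
  have hhom (r : ℝ) (ζ : ℂ) : ((m (r * ζ)).re : ℂ) = (r : ℂ)⁻¹ * ((m ζ).re : ℂ) := by
    simp only [m, cauchyBeurlingSymbol_ofReal_mul, mul_left_comm (c : ℂ), ← mul_add]
    rw [← Complex.ofReal_inv, Complex.re_ofReal_mul, Complex.ofReal_mul]
  have hconj (ζ : ℂ) : m (conj ζ) = conj (m ζ) := by
    simp only [m, cauchyBeurlingSymbol_conj, map_add, map_mul, Complex.conj_ofReal]
  have hint : Integrable fun ζ => m ζ * 𝓕 φ ζ := hsplit ▸ hint₀.add hint₁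
  refine (integral_exp_mul_mul_ft2 hg (m := fun ζ => (m ζ).re) hhom x).trans ?_
  rw [fourierInv_re_mul (SchwartzMap.fourier_coe φ ▸ hφ.fourier) hconj hint, hsplit,
    fourierInv_add_of_integrable hint₀ hint₁, fourierInv_const_smul]
  rfl

variable {ϕ : ℝ × ℝ → ℝ}

theorem cauchyBeurlingSymbol_eq_conj_pow_div (n : ℕ) (ζ : ℂ) :
    cauchyBeurlingSymbol n ζ = conj ζ ^ (2 * n + 1) / (Complex.normSq ζ ^ (n + 1) : ℝ) := by
  rcases eq_or_ne ζ 0 with rfl | hζ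
  · simp [cauchyBeurlingSymbol]
  · have hconj : conj ζ ≠ 0 := (map_ne_zero _).2 hζ
    rw [cauchyBeurlingSymbol, Complex.ofReal_pow, Complex.normSq_eq_conj_mul_self, mul_pow]
    field_simp
    ring

theorem re_cauchyBeurlingSymbol_zero (a b : ℝ) :
    (cauchyBeurlingSymbol 0 ⟨a, b⟩).re = a / (a ^ 2 + b ^ 2) := by
  rw [cauchyBeurlingSymbol_eq_conj_pow_div, Complex.div_ofReal_re, Complex.normSq_mk]
  simp [sq]

theorem re_cauchyBeurlingSymbol_one (a b : ℝ) :
    (cauchyBeurlingSymbol 1 ⟨a, b⟩).re = (a ^ 3 - 3 * a * b ^ 2) / (a ^ 2 + b ^ 2) ^ 2 := by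
  rw [cauchyBeurlingSymbol_eq_conj_pow_div, Complex.div_ofReal_re, Complex.normSq_mk]
  congr 1
  · simp only [pow_succ, pow_zero, one_mul, mul_one, Complex.mul_re, Complex.mul_im,
      Complex.conj_re, Complex.conj_im]
    ring
  · ring

theorem re_cauchyBeurlingSymbol_zero_add_mul_one (c a b : ℝ) :
    ((cauchyBeurlingSymbol 0 ⟨a, b⟩ + c * cauchyBeurlingSymbol 1 ⟨a, b⟩).re : ℂ) =
      a * ((1 + c) * a ^ 2 + (1 - 3 * c) * b ^ 2) / (a ^ 2 + b ^ 2) ^ 2 := by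
  have hreal : (cauchyBeurlingSymbol 0 ⟨a, b⟩ + c * cauchyBeurlingSymbol 1 ⟨a, b⟩).re =
      a * ((1 + c) * a ^ 2 + (1 - 3 * c) * b ^ 2) / (a ^ 2 + b ^ 2) ^ 2 := by
    rw [Complex.add_re, Complex.re_ofReal_mul, re_cauchyBeurlingSymbol_zero,
      re_cauchyBeurlingSymbol_one]
    rcases eq_or_ne (a ^ 2 + b ^ 2) 0 with h | h
    · simp [h]
    · field_simp
      ring
  exact_mod_cast hreal

theorem f2_eq_cauchyBeurling (hconv : ∀ z, φ z = conv2 ϕ (z.re, z.im)) (hφ : IsRadial φ) (x : ℝ) :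
    f2 ϕ x = -Complex.I * (x * (cauchyBeurling 0 φ x + cauchyBeurling 1 φ x)) := by
  have hint := integral_exp_mul_re_cauchyBeurlingSymbol_mul_ft2 hconv hφ 1 x
  simp only [re_cauchyBeurlingSymbol_zero_add_mul_one] at hint
  calc f2 ϕ x = (x / π : ℝ) * (-Complex.I / 2 * (2 * π *
        (cauchyBeurling 0 φ x + (1 : ℝ) * cauchyBeurling 1 φ x))) := by
        rw [f2, ← hint, ← integral_const_mul (-Complex.I / 2 : ℂ)]
        congr 1
        refine integral_congr_ae (μ := volume) (.of_forall fun η => ?_)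
        push_cast
        ring
    _ = _ := by
        push_cast
        field_simp

theorem f1_eq_cauchyBeurling (hconv : ∀ z, φ z = conv2 ϕ (z.re, z.im)) (hφ : IsRadial φ) (x : ℝ) :
    f1 ϕ x = -Complex.I / 2 * (x * (cauchyBeurling 0 φ x - cauchyBeurling 1 φ x)) := by
  have hint := integral_exp_mul_re_cauchyBeurlingSymbol_mul_ft2 hconv hφ (-1) x
  simp only [re_cauchyBeurlingSymbol_zero_add_mul_one] at hint
  calc f1 ϕ x = (x / π : ℝ) * (-Complex.I / 4 * (2 * π *
        (cauchyBeurling 0 φ x + (-1 : ℝ) * cauchyBeurling 1 φ x))) := by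
        rw [f1, ← hint, ← integral_const_mul (-Complex.I / 4 : ℂ)]
        congr 1
        refine integral_congr_ae (μ := volume) (.of_forall fun η => ?_)
        push_cast
        ring
    _ = _ := by
        push_cast
        field_simp
        ring

theorem contDiff_f2 (hconv : ∀ z, φ z = conv2 ϕ (z.re, z.im)) (hφ : IsRadial φ) :
    ContDiff ℝ ∞ (f2 ϕ) := by
  rw [funext (f2_eq_cauchyBeurling hconv hφ)]
  exact contDiff_const.mul (Complex.ofRealCLM.contDiff.mul
    ((contDiff_cauchyBeurling_ofReal 0 φ).add (contDiff_cauchyBeurling_ofReal 1 φ)))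

theorem contDiff_f1 (hconv : ∀ z, φ z = conv2 ϕ (z.re, z.im)) (hφ : IsRadial φ) :
    ContDiff ℝ ∞ (f1 ϕ) := by
  rw [funext (f1_eq_cauchyBeurling hconv hφ)]
  exact contDiff_const.mul (Complex.ofRealCLM.contDiff.mul
    ((contDiff_cauchyBeurling_ofReal 0 φ).sub (contDiff_cauchyBeurling_ofReal 1 φ)))

theorem f2_eq_zero_of_support_subset (hconv : ∀ z, φ z = conv2 ϕ (z.re, z.im)) (hφ : IsRadial φ)
    (hmom : ∫ z, (‖z‖ ^ 2 * φ z : ℂ) = 0) {x : ℝ}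
    (hx : Function.support φ ⊆ Metric.closedBall 0 |x|) : f2 ϕ x = 0 := by
  have hcube := ofReal_pow_three_mul_cauchyBeurling_add_of_support_subset hφ hx
  rw [hmom, mul_zero] at hcube
  rw [f2_eq_cauchyBeurling hconv hφ, mul_eq_zero, mul_eq_zero]
  exact .inr ((mul_eq_zero.1 hcube).imp_left eq_zero_of_pow_eq_zero)

theorem f1_eq_integral_of_support_subset (hconv : ∀ z, φ z = conv2 ϕ (z.re, z.im))
    (hφ : IsRadial φ) (hmom : ∫ z, (‖z‖ ^ 2 * φ z : ℂ) = 0) {x : ℝ}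
    (hx : Function.support φ ⊆ Metric.closedBall 0 |x|) : f1 ϕ x = ∫ z, φ z := by
  have hf2 := f2_eq_zero_of_support_subset hconv hφ hmom hx
  rw [f2_eq_cauchyBeurling hconv hφ] at hf2
  have hzero := ofReal_mul_cauchyBeurling_zero_of_support_subset hφ hx
  rw [f1_eq_cauchyBeurling hconv hφ]
  linear_combination -Complex.I * hzero - 2⁻¹ * hf2 - (∫ z, φ z) * Complex.I_sq

end RealPlane

section SelfConvolution

open scoped Convolution

theorem IsRadial.convolution {V E E' F : Type*} [NormedAddCommGroup V] [InnerProductSpace ℝ V]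
    [MeasurableSpace V] [BorelSpace V] [FiniteDimensional ℝ V] [NormedAddCommGroup E]
    [NormedSpace ℝ E] [NormedAddCommGroup E'] [NormedSpace ℝ E'] [NormedAddCommGroup F]
    [NormedSpace ℝ F] {f : V → E} {g : V → E'} (hf : IsRadial f) (hg : IsRadial g)
    (L : E →L[ℝ] E' →L[ℝ] F) : IsRadial (f ⋆[L, volume] g) := fun A x => by
  rw [MeasureTheory.convolution, MeasureTheory.convolution,
    ← A.measurePreserving.integral_comp A.toHomeomorph.measurableEmbedding]
  simp only [hf A, ← map_sub, hg A]

theorem isRadial_comp_equivRealProd {E : Type*} {f : ℝ × ℝ → E}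
    (hf : ∀ x y : ℝ × ℝ, x.1 ^ 2 + x.2 ^ 2 = y.1 ^ 2 + y.2 ^ 2 → f x = f y) :
    IsRadial (f ∘ Complex.equivRealProdCLM) := fun A z => by
  apply hf
  have hnormSq : Complex.normSq (A z) = Complex.normSq z := by
    rw [← Complex.sq_norm, A.norm_map, Complex.sq_norm]
  simpa [Complex.normSq_apply, sq] using hnormSq

theorem conv2_re_im (ϕ : ℝ × ℝ → ℝ) (z : ℂ) :
    conv2 ϕ (z.re, z.im) = ((ϕ ∘ Complex.equivRealProdCLM) ⋆[ContinuousLinearMap.mul ℝ ℝ, volume]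
      (ϕ ∘ Complex.equivRealProdCLM)) z := by
  rw [conv2, ← integral_comp_re_im]
  rfl

theorem ofReal_m2 {ϕ : ℝ × ℝ → ℝ} {φ : ℂ → ℂ} (hφ : ∀ z, φ z = conv2 ϕ (z.re, z.im)) :
    (m2 ϕ : ℂ) = ∫ z, (‖z‖ ^ 2 * φ z : ℂ) := by
  rw [m2, ← integral_comp_re_im, ← integral_complex_ofReal]
  refine integral_congr_ae (.of_forall fun z => ?_)
  have hnorm : ‖z‖ ^ 2 = z.re ^ 2 + z.im ^ 2 := by
    rw [Complex.sq_norm, Complex.normSq_apply, sq, sq]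
  simp only [hφ, ← Complex.ofReal_pow, hnorm, Complex.ofReal_mul]

theorem isRadial_of_eq_conv2 {ϕ : ℝ × ℝ → ℝ} {φ : ℂ → ℂ}
    (hϕ : ∀ x y : ℝ × ℝ, x.1 ^ 2 + x.2 ^ 2 = y.1 ^ 2 + y.2 ^ 2 → ϕ x = ϕ y)
    (hφ : ∀ z, φ z = conv2 ϕ (z.re, z.im)) : IsRadial φ := fun A z => by
  have hradial := isRadial_comp_equivRealProd hϕ
  rw [hφ, hφ, conv2_re_im, conv2_re_im, hradial.convolution hradial]

theorem integral_of_eq_conv2 {ϕ : ℝ × ℝ → ℝ} {φ : ℂ → ℂ} (hϕ : Integrable ϕ)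
    (hφ : ∀ z, φ z = conv2 ϕ (z.re, z.im)) : ∫ z, φ z = ((∫ x, ϕ x) ^ 2 : ℝ) := by
  have hint : Integrable (ϕ ∘ Complex.equivRealProdCLM) :=
    Complex.volume_preserving_equiv_real_prod.integrable_comp_of_integrable hϕ
  simp only [hφ, conv2_re_im]
  rw [integral_complex_ofReal, integral_convolution _ hint hint, sq, ← integral_comp_re_im ϕ]
  rfl

theorem exists_schwartzMap_eq_conv2 {ϕ : ℝ × ℝ → ℝ} (hsmooth : ContDiff ℝ ∞ ϕ)
    (hsupp : HasCompactSupport ϕ) :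
    ∃ φ : 𝓢(ℂ, ℂ), HasCompactSupport φ ∧ ∀ z, φ z = conv2 ϕ (z.re, z.im) := by
  have hsupp' : HasCompactSupport (ϕ ∘ Complex.equivRealProdCLM) :=
    hsupp.comp_homeomorph Complex.equivRealProdCLM.toHomeomorph
  have hsmooth' : ContDiff ℝ ∞ (ϕ ∘ Complex.equivRealProdCLM) :=
    hsmooth.comp Complex.equivRealProdCLM.contDiff
  have hcompact : HasCompactSupport fun z : ℂ => (conv2 ϕ (z.re, z.im) : ℂ) := by
    simp only [conv2_re_im]
    exact (hsupp'.convolution _ hsupp').comp_left (g := Complex.ofReal) Complex.ofReal_zero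
  have hcontDiff : ContDiff ℝ ∞ fun z : ℂ => (conv2 ϕ (z.re, z.im) : ℂ) := by
    simp only [conv2_re_im]
    exact Complex.ofRealCLM.contDiff.comp
      (hsupp'.contDiff_convolution_left _ hsmooth' hsmooth'.continuous.locallyIntegrable)
  exact ⟨hcompact.toSchwartzMap hcontDiff, hcompact, fun _ => rfl⟩

end SelfConvolution

theorem hasCompactSupport_of_forall_support_subset {F E : Type*} [Zero F] [Zero E] {φ : ℂ → F}
    {f : ℝ → E} (hφ : HasCompactSupport φ)
    (hf : ∀ x, Function.support φ ⊆ Metric.closedBall 0 |x| → f x = 0) : HasCompactSupport f := by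
  obtain ⟨R, hR⟩ := hφ.isCompact.isBounded.subset_closedBall 0
  refine .intro (isCompact_closedBall 0 R) fun x hx => hf x ?_
  have hRx : R ≤ |x| := by simpa using (not_le.1 fun h => hx (by simpa using h)).le
  exact (subset_tsupport φ).trans (hR.trans (Metric.closedBall_subset_closedBall hRx))

theorem exists_forall_norm_iteratedDeriv_le_div {E : Type*} [NormedAddCommGroup E]
    [NormedSpace ℝ E] (ψ : 𝓢(ℝ, E)) (m n : ℕ) :
    ∃ C, 0 < C ∧ ∀ k ≤ m, ∀ x, ‖iteratedDeriv k ψ x‖ ≤ C / (1 + |x| ^ n) := by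
  obtain ⟨C, hC⟩ : ∃ C, ∀ k ≤ m, ∀ x, (1 + ‖x‖) ^ n * ‖iteratedFDeriv ℝ k ψ x‖ ≤ C :=
    ⟨_, fun k hk x => ψ.one_add_le_sup_seminorm_apply (𝕜 := ℝ) (m := (n, m)) le_rfl hk x⟩
  have hC₀ : 0 ≤ C := le_trans (by positivity) (hC 0 m.zero_le 0)
  refine ⟨2 * C + 1, by positivity, fun k hk x => ?_⟩
  rw [le_div_iff₀' (by positivity), ← norm_iteratedFDeriv_eq_norm_iteratedDeriv]
  have hone : 1 ≤ (1 + ‖x‖) ^ n := one_le_pow₀ (le_add_of_nonneg_right (norm_nonneg x))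
  have hpow : |x| ^ n ≤ (1 + ‖x‖) ^ n := by
    gcongr
    exact le_add_of_nonneg_left zero_le_one
  calc (1 + |x| ^ n) * ‖iteratedFDeriv ℝ k ψ x‖
      ≤ (2 * (1 + ‖x‖) ^ n) * ‖iteratedFDeriv ℝ k ψ x‖ := by
        gcongr
        linarith
    _ ≤ 2 * C := by
        rw [mul_assoc]
        gcongr
        exact hC k hk x
    _ ≤ 2 * C + 1 := by linarith

theorem statement8_general (ϕ : ℝ × ℝ → ℝ) (hsmooth : ContDiff ℝ ∞ ϕ) (hsupp : HasCompactSupport ϕ)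
    (hradial : ∀ x y : ℝ × ℝ, x.1 ^ 2 + x.2 ^ 2 = y.1 ^ 2 + y.2 ^ 2 → ϕ x = ϕ y)
    (hm2 : m2 ϕ = 0) (m n : ℕ) :
    ∃ C, 0 < C ∧ ∀ k ≤ m, ∀ x,
      ‖iteratedDeriv k (f2 ϕ) x‖ +
          ‖iteratedDeriv k (fun x => f1 ϕ x - ((∫ y, ϕ y) ^ 2 : ℝ)) x‖ ≤
        C / (1 + |x| ^ n) := by
  obtain ⟨φ, hcompact, hconv⟩ := exists_schwartzMap_eq_conv2 hsmooth hsupp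
  have hφ : IsRadial φ := isRadial_of_eq_conv2 hradial hconv
  have hmass : ∫ z, φ z = ((∫ y, ϕ y) ^ 2 : ℝ) :=
    integral_of_eq_conv2 (hsmooth.continuous.integrable_of_hasCompactSupport hsupp) hconv
  have hmom : ∫ z, (‖z‖ ^ 2 * φ z : ℂ) = 0 := by rw [← ofReal_m2 hconv, hm2, Complex.ofReal_zero]
  have hf2 : HasCompactSupport (f2 ϕ) := hasCompactSupport_of_forall_support_subset hcompact
    fun _ => f2_eq_zero_of_support_subset hconv hφ hmom
  have hf1 : HasCompactSupport fun x => f1 ϕ x - ((∫ y, ϕ y) ^ 2 : ℝ) :=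
    hasCompactSupport_of_forall_support_subset hcompact fun _ hx => by
      rw [f1_eq_integral_of_support_subset hconv hφ hmom hx, hmass, sub_self]
  obtain ⟨C₂, hC₂, hbound₂⟩ := exists_forall_norm_iteratedDeriv_le_div
    (hf2.toSchwartzMap (contDiff_f2 hconv hφ)) m n
  obtain ⟨C₁, hC₁, hbound₁⟩ := exists_forall_norm_iteratedDeriv_le_div
    (hf1.toSchwartzMap ((contDiff_f1 hconv hφ).sub contDiff_const)) m n
  refine ⟨C₂ + C₁, add_pos hC₂ hC₁, fun k hk x => ?_⟩
  rw [add_div]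
  exact add_le_add (hbound₂ k hk x) (hbound₁ k hk x)

/-- Improved decay of `f₂` and `f₃` when the second moment
`m₂ = ∫ |x|² (ϕ∗ϕ)(x) dx` vanishes. -/
theorem statement8 (ϕ : ℝ × ℝ → ℝ)
    (hsmooth : ContDiff ℝ (⊤ : ℕ∞) ϕ)
    (hsupp : HasCompactSupport ϕ)
    (hradial : ∀ x y : ℝ × ℝ, x.1 ^ 2 + x.2 ^ 2 = y.1 ^ 2 + y.2 ^ 2 → ϕ x = ϕ y)
    (hnorm : (∫ x : ℝ × ℝ, ϕ x) = 1)
    (hm2 : m2 ϕ = 0) :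
    ∃ C : ℝ, 0 < C ∧
      ∀ k : ℕ, k ≤ 2 → ∀ x : ℝ,
        ‖iteratedDeriv k (f2 ϕ) x‖ + ‖iteratedDeriv k (f3 ϕ) x‖
          ≤ C / (1 + x ^ 4) := by
  have hf3 : f3 ϕ = fun x => f1 ϕ x - ((∫ y, ϕ y) ^ 2 : ℝ) := by simp [funext_iff, f3, hnorm]
  simpa only [hf3, (by decide : Even 4).pow_abs] using
    statement8_general ϕ hsmooth hsupp hradial hm2 2 4
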